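/- arXiv:2206.10246 — 3 statements merged into one kernel-verified Lean document; each statement's English description precedes it below -/
import Mathlib

section
/- Let p > 0, q ≥ 1 an integer, r ∈ (0,1), and A, B real with -1 < A < p - 1. Define K̃(X) = ∫₀^r u^{A + B X} (1 - exp(-X/(q u^p))) du for small X > 0. Then lim_{X → 0⁺} X^{-(A+1)/p} K̃(X) = ∫₀^∞ v^A (1 - exp(-1/(q v^p))) dv, and this improper integral converges. -/
open MeasureTheory Set Filter

/-- The profile `1 - exp (-1 / (q v ^ p))` is nonnegative for `v > 0`. -/
theorem one_sub_exp_neg_inv_rpow_nonneg (p : ℝ) (q : ℕ) {v : ℝ} (hv : 0 < v) :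
    0 ≤ 1 - Real.exp (-1 / (q * v ^ p)) := by
  have h : -1 / ((q : ℝ) * v ^ p) ≤ 0 := div_nonpos_of_nonpos_of_nonneg (by norm_num) (by positivity)
  linarith [Real.exp_le_one_iff.mpr h]

theorem one_sub_exp_neg_inv_rpow_le_rpow_neg (p : ℝ) {q : ℕ} (hq : 1 ≤ q) {v : ℝ} (hv : 0 < v) :
    1 - Real.exp (-1 / (q * v ^ p)) ≤ v ^ (-p) := by
  have hq' : (1 : ℝ) ≤ q := by exact_mod_cast hq
  have hvp : 0 < v ^ p := Real.rpow_pos_of_pos hv p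
  have h := Real.add_one_le_exp (-1 / ((q : ℝ) * v ^ p))
  have h' : 1 / ((q : ℝ) * v ^ p) ≤ 1 / v ^ p :=
    one_div_le_one_div_of_le hvp (le_mul_of_one_le_left hvp.le hq')
  rw [Real.rpow_neg hv.le, ← one_div]
  rw [neg_div] at h ⊢
  linarith

theorem integrableOn_rpow_mul_one_sub_exp {p : ℝ} {q : ℕ} (hq : 1 ≤ q) {a : ℝ}
    (ha : -1 < a) (ha' : a < p - 1) :
    IntegrableOn (fun v : ℝ => v ^ a * (1 - Real.exp (-1 / (q * v ^ p)))) (Ioi 0) volume := by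
  have hmeas : Measurable (fun v : ℝ => v ^ a * (1 - Real.exp (-1 / (q * v ^ p)))) := by
    fun_prop
  rw [← Ioc_union_Ioi_eq_Ioi (zero_le_one' ℝ)]
  refine IntegrableOn.union ?_ ?_
  · have hint : IntegrableOn (fun v : ℝ => v ^ a) (Ioc 0 1) volume :=
      (intervalIntegrable_iff_integrableOn_Ioc_of_le zero_le_one).mp
        (intervalIntegral.intervalIntegrable_rpow' ha)
    refine Integrable.mono' hint hmeas.aestronglyMeasurable ?_
    refine (ae_restrict_mem measurableSet_Ioc).mono fun v hv => ?_
    have hva : 0 ≤ v ^ a := Real.rpow_nonneg hv.1.le a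
    rw [Real.norm_of_nonneg (mul_nonneg hva (one_sub_exp_neg_inv_rpow_nonneg p q hv.1))]
    exact mul_le_of_le_one_right hva (by linarith [Real.exp_pos (-1 / ((q : ℝ) * v ^ p))])
  · have hint : IntegrableOn (fun v : ℝ => v ^ (a - p)) (Ioi 1) volume :=
      integrableOn_Ioi_rpow_of_lt (by linarith) zero_lt_one
    refine Integrable.mono' hint hmeas.aestronglyMeasurable ?_
    refine (ae_restrict_mem measurableSet_Ioi).mono fun v hv => ?_
    have hv0 : 0 < v := zero_lt_one.trans hv
    have hva : 0 ≤ v ^ a := Real.rpow_nonneg hv0.le a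
    rw [Real.norm_of_nonneg (mul_nonneg hva (one_sub_exp_neg_inv_rpow_nonneg p q hv0)),
      show a - p = a + -p from sub_eq_add_neg a p, Real.rpow_add hv0]
    exact mul_le_mul_of_nonneg_left (one_sub_exp_neg_inv_rpow_le_rpow_neg p hq hv0) hva

theorem tendsto_rpow_mul_self_nhdsGT_zero (c : ℝ) :
    Tendsto (fun x : ℝ => x ^ (c * x)) (nhdsWithin 0 (Ioi 0)) (nhds 1) := by
  have h : Continuous fun x : ℝ => Real.exp (c * (x * Real.log x)) :=
    Real.continuous_exp.comp (continuous_const.mul Real.continuous_mul_log)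
  have h0 := (h.tendsto 0).mono_left (nhdsWithin_le_nhds (s := Ioi 0))
  simp only [zero_mul, mul_zero, Real.exp_zero] at h0
  refine h0.congr' ?_
  filter_upwards [self_mem_nhdsWithin] with x hx
  rw [Real.rpow_def_of_pos hx]
  ring_nf

/-- The substitution `u = X ^ (1 / p) * v` in the truncated integral. -/
theorem rpow_mul_integral_Ioo_eq_integral_Ioi {p : ℝ} (hp : 0 < p) (q : ℕ) (r A B : ℝ) {X : ℝ}
    (hX : 0 < X) :
    X ^ (-(A + 1) / p) *
        ∫ u in Ioo (0 : ℝ) r, u ^ (A + B * X) * (1 - Real.exp (-X / (q * u ^ p))) =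
      ∫ v in Ioi (0 : ℝ), {v : ℝ | X ^ (1 / p) * v < r}.indicator
        (fun v => X ^ (B / p * X) * (v ^ (A + B * X) * (1 - Real.exp (-1 / (q * v ^ p))))) v := by
  set f : ℝ → ℝ := fun u => u ^ (A + B * X) * (1 - Real.exp (-X / (q * u ^ p))) with hf
  have hs : 0 < X ^ (1 / p) := Real.rpow_pos_of_pos hX _
  have hsub := integral_comp_mul_left_Ioi' ((Iio r).indicator f) 0 hs
  rw [mul_zero, setIntegral_indicator measurableSet_Iio, Ioi_inter_Iio, smul_eq_mul] at hsub
  rw [← hsub, ← mul_assoc, ← integral_const_mul]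
  refine setIntegral_congr_fun measurableSet_Ioi fun v (hv : 0 < v) => ?_
  by_cases hvr : X ^ (1 / p) * v < r
  · have hsp : (X ^ (1 / p)) ^ p = X := by
      rw [← Real.rpow_mul hX.le, one_div_mul_cancel hp.ne', Real.rpow_one]
    have hexp : -X / ((q : ℝ) * (X ^ (1 / p) * v) ^ p) = -1 / (q * v ^ p) := by
      rw [Real.mul_rpow hs.le hv.le, hsp, mul_left_comm,
        ← mul_div_mul_left (-1) _ hX.ne', mul_neg_one]
    have hpow : X ^ (-(A + 1) / p) * X ^ (1 / p) * X ^ (1 / p * (A + B * X)) =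
        X ^ (B / p * X) := by
      rw [← Real.rpow_add hX, ← Real.rpow_add hX]
      congr 1
      field_simp
      ring
    simp only [indicator, mem_Iio, mem_ofPred_eq, hvr, if_true, hf]
    rw [hexp, Real.mul_rpow hs.le hv.le, ← Real.rpow_mul hX.le, ← hpow]
    ring
  · simp only [indicator, mem_Iio, mem_ofPred_eq, hvr, if_false, mul_zero]

theorem rpow_add_le_rpow_sub_add_rpow_add {v : ℝ} (hv : 0 < v) (a : ℝ) {t e : ℝ} (ht : |t| ≤ e) :
    v ^ (a + t) ≤ v ^ (a - e) + v ^ (a + e) := by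
  obtain ⟨h₁, h₂⟩ := abs_le.mp ht
  rcases le_total v 1 with h | h
  · have := Real.rpow_le_rpow_of_exponent_ge hv h (show a - e ≤ a + t by linarith)
    linarith [Real.rpow_nonneg hv.le (a + e)]
  · have := Real.rpow_le_rpow_of_exponent_le h (show a + t ≤ a + e by linarith)
    linarith [Real.rpow_nonneg hv.le (a - e)]

/-- For `p > 0` and `-1 < A < p - 1`, with
`K̃(X) = ∫₀^r u^{A+BX} (1 - exp(-X/(q u^p))) du`, one has
`lim_{X → 0⁺} X^{-(A+1)/p} K̃(X) = ∫₀^∞ v^A (1 - exp(-1/(q v^p))) dv`,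
and this improper integral converges. -/
theorem stmt8 (p : ℝ) (hp : 0 < p) (q : ℕ) (hq : 1 ≤ q) (r : ℝ)
    (hr : r ∈ Ioo (0 : ℝ) 1) (A B : ℝ) (hA : -1 < A) (hA' : A < p - 1) :
    IntegrableOn (fun v : ℝ => v ^ A * (1 - Real.exp (-1 / (q * v ^ p)))) (Ioi 0) volume ∧
    Tendsto
      (fun X : ℝ => X ^ (-(A + 1) / p) *
        ∫ u in Ioo (0 : ℝ) r, u ^ (A + B * X) * (1 - Real.exp (-X / (q * u ^ p))))
      (nhdsWithin 0 (Ioi 0))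
      (nhds (∫ v in Ioi (0 : ℝ), v ^ A * (1 - Real.exp (-1 / (q * v ^ p))))) := by
  refine ⟨integrableOn_rpow_mul_one_sub_exp hq hA hA', ?_⟩
  obtain ⟨e, he, heA, heA'⟩ : ∃ e : ℝ, 0 < e ∧ -1 < A - e ∧ A + e < p - 1 := by
    obtain ⟨e, he, hlt⟩ := exists_between (lt_min (neg_lt_iff_pos_add.mp hA) (sub_pos.mpr hA'))
    obtain ⟨h₁, h₂⟩ := lt_min_iff.mp hlt
    exact ⟨e, he, by linarith, by linarith⟩
  have hpos : ∀ᶠ X : ℝ in nhdsWithin 0 (Ioi 0), 0 < X := self_mem_nhdsWithin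
  have hid : Tendsto (fun X : ℝ => X) (nhdsWithin 0 (Ioi 0)) (nhds 0) := nhdsWithin_le_nhds
  have hBX : Tendsto (fun X : ℝ => B * X) (nhdsWithin 0 (Ioi 0)) (nhds 0) := by
    simpa using hid.const_mul B
  have hscale := tendsto_rpow_mul_self_nhdsGT_zero (B / p)
  refine Tendsto.congr'
    (hpos.mono fun X hX => (rpow_mul_integral_Ioo_eq_integral_Ioi hp q r A B hX).symm) ?_
  refine tendsto_integral_filter_of_dominated_convergence
    (fun v => 2 * (v ^ (A - e) * (1 - Real.exp (-1 / (q * v ^ p))) +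
      v ^ (A + e) * (1 - Real.exp (-1 / (q * v ^ p))))) ?_ ?_ ?_ ?_
  · refine Eventually.of_forall fun X => Measurable.aestronglyMeasurable ?_
    exact Measurable.indicator (by fun_prop)
      (measurableSet_lt (by fun_prop) measurable_const)
  · filter_upwards [hpos, hscale.eventually_le_const one_lt_two,
      hBX.abs.eventually_le_const (by simpa using he)] with X hX hX2 hXe
    refine (ae_restrict_mem measurableSet_Ioi).mono fun v (hv : 0 < v) => ?_
    have hprof := one_sub_exp_neg_inv_rpow_nonneg p q hv
    refine (norm_indicator_le_norm_self _ _).trans ?_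
    rw [Real.norm_of_nonneg (by positivity), ← add_mul]
    gcongr
    exact rpow_add_le_rpow_sub_add_rpow_add hv A hXe
  · exact ((integrableOn_rpow_mul_one_sub_exp hq heA (by linarith)).add
      (integrableOn_rpow_mul_one_sub_exp hq (by linarith) heA')).const_mul 2
  · refine (ae_restrict_mem measurableSet_Ioi).mono fun v (hv : 0 < v) => ?_
    have hroot : Tendsto (fun X : ℝ => X ^ (1 / p) * v) (nhdsWithin 0 (Ioi 0)) (nhds 0) := by
      have h := (hid.rpow_const (p := 1 / p) (Or.inr (by positivity))).mul_const v
      rwa [Real.zero_rpow (by positivity), zero_mul] at h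
    have hpow : Tendsto (fun X : ℝ => v ^ (A + B * X)) (nhdsWithin 0 (Ioi 0)) (nhds (v ^ A)) := by
      have h := (tendsto_const_nhds (x := v)).rpow (hBX.const_add A) (Or.inl hv.ne')
      rwa [add_zero] at h
    have hlim := hscale.mul (hpow.mul_const (1 - Real.exp (-1 / (q * v ^ p))))
    rw [one_mul] at hlim
    refine hlim.congr' ?_
    filter_upwards [hroot.eventually_lt_const hr.1] with X hX
    exact (if_pos hX).symm
end

section
/- Let p > 0, q ≥ 1 an integer, r ∈ (0,1), B ∈ ℝ, and A = p - 1. Define K̃(X) = ∫₀^r u^{p-1+BX} (1 - exp(-X/(q u^p))) du for small X > 0. Then lim_{X → 0⁺} X^{-1} |log X|^{-1} K̃(X) = 1/(p q). -/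
open MeasureTheory Set Filter

/-- The substitution `u = exp (-L s)`. -/
theorem setIntegral_Ioo_eq_setIntegral_exp {L r : ℝ} (hL : 0 < L) (hr : 0 < r) (g : ℝ → ℝ) :
    ∫ u in Ioo (0 : ℝ) r, g u =
      ∫ s in Ioi (-Real.log r / L), L * Real.exp (-L * s) * g (Real.exp (-L * s)) := by
  have himage : (fun s : ℝ => Real.exp (-L * s)) '' Ioi (-Real.log r / L) = Ioo 0 r := by
    ext u
    simp only [mem_image, mem_Ioi, mem_Ioo]
    constructor
    · rintro ⟨s, hs, rfl⟩
      refine ⟨Real.exp_pos _, (Real.lt_log_iff_exp_lt hr).1 ?_⟩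
      rw [div_lt_iff₀ hL] at hs
      linarith
    · rintro ⟨hu, hur⟩
      refine ⟨-Real.log u / L, ?_, ?_⟩
      · have := Real.log_lt_log hu hur
        gcongr
      · rw [show -L * (-Real.log u / L) = Real.log u by field_simp, Real.exp_log hu]
  rw [← himage, integral_image_eq_integral_abs_deriv_smul measurableSet_Ioi
    (f' := fun s => Real.exp (-L * s) * (-L * 1))]
  · refine setIntegral_congr_fun measurableSet_Ioi fun s _ => ?_
    have : |Real.exp (-L * s) * (-L * 1)| = L * Real.exp (-L * s) := by
      rw [abs_mul, abs_of_pos (Real.exp_pos _), mul_one, abs_neg, abs_of_pos hL, mul_comm]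
    simp only [this, smul_eq_mul]
  · intro s _
    exact (((hasDerivAt_id s).const_mul (-L)).exp).hasDerivWithinAt
  · intro s _ t _ hst
    have := Real.exp_injective hst
    have hL' : -L ≠ 0 := by linarith
    exact mul_left_cancel₀ hL' this

theorem one_sub_exp_neg_div_nonneg {q y : ℝ} (hq : 0 < q) (hy : 0 < y) :
    0 ≤ (1 - Real.exp (-y / q)) / y := by
  refine div_nonneg (sub_nonneg.2 (Real.exp_le_one_iff.2 ?_)) hy.le
  exact div_nonpos_of_nonpos_of_nonneg (by linarith) hq.le

theorem one_sub_exp_neg_div_le_inv {q y : ℝ} (hy : 0 < y) :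
    (1 - Real.exp (-y / q)) / y ≤ y⁻¹ := by
  rw [div_eq_mul_inv]
  exact mul_le_of_le_one_left (by positivity) (by linarith [Real.exp_pos (-y / q)])

theorem one_sub_exp_neg_div_le_one {q y : ℝ} (hq : 1 ≤ q) (hy : 0 < y) :
    (1 - Real.exp (-y / q)) / y ≤ 1 := by
  rw [div_le_one hy]
  have h1 := Real.add_one_le_exp (-y / q)
  have h2 : y / q ≤ y := div_le_self hy.le hq
  rw [neg_div] at h1 ⊢
  linarith

theorem tendsto_one_sub_exp_neg_div_zero (q : ℝ) :
    Tendsto (fun y : ℝ => (1 - Real.exp (-y / q)) / y) (nhdsWithin 0 (Ioi 0)) (nhds (1 / q)) := by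
  have h : HasDerivAt (fun y : ℝ => 1 - Real.exp (-y / q)) (1 / q) 0 := by
    have := (((hasDerivAt_id (0 : ℝ)).neg.div_const q).exp).const_sub 1
    simpa [neg_div] using this
  have := h.tendsto_slope.mono_left (nhdsWithin_mono 0 (fun x (hx : 0 < x) => hx.ne'))
  refine this.congr fun y => ?_
  simp [slope_def_field]

theorem tendsto_one_sub_exp_neg_div_atTop {q : ℝ} (hq : 0 < q) :
    Tendsto (fun y : ℝ => (1 - Real.exp (-y / q)) / y) atTop (nhds 0) := by
  refine squeeze_zero' ?_ ?_ tendsto_inv_atTop_zero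
  · filter_upwards [eventually_gt_atTop 0] with y hy using one_sub_exp_neg_div_nonneg hq hy
  · filter_upwards [eventually_gt_atTop 0] with y hy using one_sub_exp_neg_div_le_inv hy

/-- The integrand of `X⁻¹ |log X|⁻¹ K̃(X)` after the substitution `u = X ^ s`, with
`L = -log X` and `b = B X L`. -/
noncomputable def criticalIntegrand (p q b L s : ℝ) : ℝ :=
  Real.exp (-s * b) *
    ((1 - Real.exp (-Real.exp (L * (s * p - 1)) / q)) / Real.exp (L * (s * p - 1)))

theorem continuous_criticalIntegrand (p q b L : ℝ) :
    Continuous (criticalIntegrand p q b L) := by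
  unfold criticalIntegrand
  refine Continuous.mul (by fun_prop) (Continuous.div (by fun_prop) (by fun_prop) ?_)
  exact fun s => (Real.exp_pos _).ne'

theorem abs_criticalIntegrand_le {p q b L s : ℝ} (hq : 1 ≤ q) (hb : |b| ≤ p)
    (hL : 2 ≤ L) (hs : 0 < s) :
    |criticalIntegrand p q b L s| ≤ Real.exp 2 * Real.exp (-p * s) := by
  have hy := Real.exp_pos (L * (s * p - 1))
  have hsb : -s * b ≤ s * p := by nlinarith [neg_abs_le b]
  rw [criticalIntegrand, abs_of_nonneg
    (mul_nonneg (Real.exp_pos _).le (one_sub_exp_neg_div_nonneg (by linarith) hy))]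
  rcases le_total (s * p) 1 with h | h
  · calc _ ≤ Real.exp (-s * b) * 1 := by
          gcongr
          exact one_sub_exp_neg_div_le_one hq hy
      _ ≤ _ := by
          rw [mul_one, ← Real.exp_add]
          exact Real.exp_le_exp.2 (by nlinarith)
  · calc _ ≤ Real.exp (-s * b) * (Real.exp (L * (s * p - 1)))⁻¹ := by
          gcongr
          exact one_sub_exp_neg_div_le_inv hy
      _ ≤ _ := by
          rw [← Real.exp_neg, ← Real.exp_add, ← Real.exp_add]
          exact Real.exp_le_exp.2 (by nlinarith)

theorem tendsto_criticalIntegrand {ι : Type*} {l : Filter ι} {b L : ι → ℝ} {p q s : ℝ}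
    (hp : 0 < p) (hq : 0 < q) (hb : Tendsto b l (nhds 0)) (hL : Tendsto L l atTop)
    (hs : s ≠ 1 / p) :
    Tendsto (fun i => criticalIntegrand p q (b i) (L i) s) l
      (nhds ((Iio (1 / p)).indicator (fun _ => 1 / q) s)) := by
  have hexp : Tendsto (fun i => Real.exp (-s * b i)) l (nhds 1) := by
    have := (Real.continuous_exp.tendsto _).comp (hb.const_mul (-s))
    simpa [Function.comp_def] using this
  rcases lt_or_gt_of_ne hs with h | h
  · rw [indicator_of_mem (mem_Iio.2 h), ← one_mul (1 / q)]
    rw [lt_div_iff₀ hp] at h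
    refine hexp.mul ((tendsto_one_sub_exp_neg_div_zero q).comp
      (tendsto_nhdsWithin_iff.2 ⟨?_, Eventually.of_forall fun i => Real.exp_pos _⟩))
    exact Real.tendsto_exp_atBot.comp (hL.atTop_mul_const_of_neg (by linarith))
  · rw [indicator_of_notMem (notMem_Iio.2 h.le), ← one_mul (0 : ℝ)]
    rw [div_lt_iff₀ hp] at h
    refine hexp.mul ((tendsto_one_sub_exp_neg_div_atTop hq).comp ?_)
    exact Real.tendsto_exp_atTop.comp (hL.atTop_mul_const (by linarith))

theorem inv_mul_setIntegral_eq_setIntegral_criticalIntegrand {p q r X : ℝ} (hr : 0 < r)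
    (hX : 0 < X) (hX1 : X < 1) (B : ℝ) :
    X⁻¹ * |Real.log X|⁻¹ *
        ∫ u in Ioo (0 : ℝ) r, u ^ (p - 1 + B * X) * (1 - Real.exp (-X / (q * u ^ p))) =
      ∫ s in Ioi (-Real.log r / -Real.log X),
        criticalIntegrand p q (B * (X * -Real.log X)) (-Real.log X) s := by
  have hlog := Real.log_neg hX hX1
  obtain ⟨L, hL⟩ : ∃ L, L = -Real.log X := ⟨_, rfl⟩
  have hL0 : 0 < L := by linarith
  have hXL : X = Real.exp (-L) := by rw [hL, neg_neg, Real.exp_log hX]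
  rw [abs_of_neg hlog, ← hL, setIntegral_Ioo_eq_setIntegral_exp hL0 hr, ← integral_const_mul]
  refine setIntegral_congr_fun measurableSet_Ioi fun s _ => ?_
  have hdiv : -X / (q * Real.exp (-L * s) ^ p) = -Real.exp (L * (s * p - 1)) / q := by
    rw [← Real.exp_mul, show L * (s * p - 1) = -L - -L * s * p by ring, Real.exp_sub, ← hXL]
    rw [← neg_div, div_div, mul_comm q]
  have hpow : X⁻¹ * (Real.exp (-L * s) * Real.exp (-L * s) ^ (p - 1 + B * X)) =
      Real.exp (-s * (B * (X * L))) * (Real.exp (L * (s * p - 1)))⁻¹ := by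
    have hinv : X⁻¹ = Real.exp L := by rw [hXL, Real.exp_neg, inv_inv]
    rw [hinv, ← Real.exp_mul, ← Real.exp_neg, ← Real.exp_add, ← Real.exp_add, ← Real.exp_add]
    congr 1
    ring
  simp only [criticalIntegrand, hdiv]
  rw [div_eq_mul_inv (1 - _), mul_comm (1 - _), ← mul_assoc (Real.exp (-s * _)), ← hpow]
  field_simp

/-- Critical case `A = p - 1`: with
`K̃(X) = ∫₀^r u^{p-1+BX} (1 - exp(-X/(q u^p))) du`, one has
`lim_{X → 0⁺} X⁻¹ |log X|⁻¹ K̃(X) = 1/(p q)`. -/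
theorem stmt9 (p : ℝ) (hp : 0 < p) (q : ℕ) (hq : 1 ≤ q) (r : ℝ)
    (hr : r ∈ Ioo (0 : ℝ) 1) (B : ℝ) :
    Tendsto
      (fun X : ℝ => X⁻¹ * |Real.log X|⁻¹ *
        ∫ u in Ioo (0 : ℝ) r, u ^ (p - 1 + B * X) * (1 - Real.exp (-X / (q * u ^ p))))
      (nhdsWithin 0 (Ioi 0)) (nhds (1 / (p * q))) := by
  obtain ⟨hr0, hr1⟩ := hr
  have hq1 : (1 : ℝ) ≤ q := by exact_mod_cast hq
  have hL : Tendsto (fun X : ℝ => -Real.log X) (nhdsWithin 0 (Ioi 0)) atTop :=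
    tendsto_neg_atBot_atTop.comp Real.tendsto_log_nhdsGT_zero
  have hb : Tendsto (fun X : ℝ => B * (X * -Real.log X)) (nhdsWithin 0 (Ioi 0)) (nhds 0) := by
    have h : Tendsto (fun X : ℝ => X * -Real.log X) (nhdsWithin 0 (Ioi 0)) (nhds 0) := by
      have := (Real.continuous_mul_log.tendsto 0).neg.mono_left
        (nhdsWithin_le_nhds (s := Ioi (0 : ℝ)))
      simpa using this
    simpa using h.const_mul B
  have hcut : Tendsto (fun X : ℝ => -Real.log r / -Real.log X) (nhdsWithin 0 (Ioi 0)) (nhds 0) :=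
    hL.const_div_atTop _
  have hlogr : 0 < -Real.log r := neg_pos.2 (Real.log_neg hr0 hr1)
  have hlim : ∫ s in Ioi (0 : ℝ), (Iio (1 / p)).indicator (fun _ => 1 / (q : ℝ)) s =
      1 / (p * q) := by
    rw [setIntegral_indicator measurableSet_Iio, Ioi_inter_Iio, setIntegral_const]
    simp [hp.le, mul_comm]
  rw [← hlim]
  have hX1 : ∀ᶠ X : ℝ in nhdsWithin 0 (Ioi 0), X < 1 :=
    nhdsWithin_le_nhds (Iio_mem_nhds one_pos)
  have hdct : Tendsto (fun X : ℝ => ∫ s in Ioi (0 : ℝ),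
      (Ioi (-Real.log r / -Real.log X)).indicator
        (criticalIntegrand p q (B * (X * -Real.log X)) (-Real.log X)) s)
      (nhdsWithin 0 (Ioi 0))
      (nhds (∫ s in Ioi (0 : ℝ), (Iio (1 / p)).indicator (fun _ => 1 / (q : ℝ)) s)) := by
    refine tendsto_integral_filter_of_dominated_convergence
      (fun s => Real.exp 2 * Real.exp (-p * s)) ?_ ?_ ?_ ?_
    · exact Eventually.of_forall fun X =>
        ((continuous_criticalIntegrand _ _ _ _).measurable.indicator
          measurableSet_Ioi).aestronglyMeasurable
    · have hbp : ∀ᶠ X : ℝ in nhdsWithin 0 (Ioi 0), |B * (X * -Real.log X)| < p := by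
        have := hb.abs
        rw [abs_zero] at this
        exact this.eventually (gt_mem_nhds hp)
      filter_upwards [hbp, hL.eventually_ge_atTop 2] with X hXb hXL
      refine (ae_restrict_iff' measurableSet_Ioi).2 (Eventually.of_forall fun s hs => ?_)
      exact (norm_indicator_le_norm_self _ _).trans
        (abs_criticalIntegrand_le hq1 hXb.le hXL hs)
    · exact (integrableOn_exp_mul_Ioi (by linarith) 0).const_mul _
    · have hne : ∀ᵐ s : ℝ ∂volume.restrict (Ioi 0), s ≠ 1 / p :=
        ae_restrict_of_ae (Measure.ae_ne volume _)
      filter_upwards [hne, ae_restrict_mem measurableSet_Ioi] with s hs hs0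
      refine (tendsto_criticalIntegrand hp (by linarith) hb hL hs).congr' ?_
      filter_upwards [hcut.eventually (gt_mem_nhds hs0)] with X hX
      rw [indicator_of_mem (mem_Ioi.2 hX)]
  refine hdct.congr' ?_
  filter_upwards [self_mem_nhdsWithin, hX1] with X hX hX1
  have hpos : 0 < -Real.log X := neg_pos.2 (Real.log_neg hX hX1)
  rw [inv_mul_setIntegral_eq_setIntegral_criticalIntegrand hr0 hX hX1,
    setIntegral_indicator measurableSet_Ioi,
    inter_eq_self_of_subset_right (Ioi_subset_Ioi (by positivity))]
end

section
/- Let a, b be positive integers with 2 ≤ a < b, let p, p̃ > 0, and let q, q̃ be even integers with 2 ≤ q ≤ b and 2 ≤ q̃ ≤ a. Suppose p > 1 - a/b. Set Z(σ) = ∫_V |x^a y^b + x^a y^{b-q} e^{-1/x^p} + x^{a-q̃} y^b e^{-1/y^{p̃}}|^σ dx dy over V = [0, r₁] × [0, r₂] with r₁, r₂ ∈ (0,1). Then lim_{σ → -1/b⁺} (bσ + 1)^{1 - (1 - a/b)/p} · Z(σ) = Ĉ, where Ĉ = ∫₀^∞ x^{-a/b} (1 - e^{-1/(q x^p)}) dx,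 and this improper integral converges. -/
open MeasureTheory Set Filter

/-- The function `f(x,y) = x^a y^b + x^a y^{b-q} e^{-1/x^p} + x^{a-q̃} y^b e^{-1/y^{p̃}}`
(case (D)), with the flat exponential factors interpreted as `0` at `0`. -/
noncomputable def fD (a b q qt : ℕ) (p pt : ℝ) (x y : ℝ) : ℝ :=
  x ^ a * y ^ b + x ^ a * y ^ (b - q) * (if x = 0 then 0 else Real.exp (-1 / x ^ p)) +
    x ^ (a - qt) * y ^ b * (if y = 0 then 0 else Real.exp (-1 / y ^ pt))

open Real in
/-- Monomial factorisation of `fD` in the open quadrant. -/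
lemma fD_eq_monomial_mul {a b q qt : ℕ} (hqb : q ≤ b) (hqta : qt ≤ a) (p pt : ℝ) {x y : ℝ}
    (hx : 0 < x) (hy : 0 < y) :
    fD a b q qt p pt x y = x ^ a * y ^ b *
      (1 + exp (-1 / x ^ p) / y ^ q + exp (-1 / y ^ pt) / x ^ qt) := by
  have h1 : y ^ b = y ^ (b - q) * y ^ q := by rw [← pow_add, Nat.sub_add_cancel hqb]
  have h2 : x ^ a = x ^ (a - qt) * x ^ qt := by rw [← pow_add, Nat.sub_add_cancel hqta]
  rw [fD, if_neg hx.ne', if_neg hy.ne', mul_add, mul_add, mul_one]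
  congr 1
  · congr 1
    rw [h1]
    field_simp
  · rw [h2]
    field_simp

lemma measurable_fD (a b q qt : ℕ) (p pt : ℝ) :
    Measurable (fun z : ℝ × ℝ => fD a b q qt p pt z.1 z.2) := by
  unfold fD
  have h1 : Measurable (fun z : ℝ × ℝ => if z.1 = 0 then 0 else Real.exp (-1 / z.1 ^ p)) :=
    Measurable.ite (measurable_fst (measurableSet_singleton 0)) measurable_const (by fun_prop)
  have h2 : Measurable (fun z : ℝ × ℝ => if z.2 = 0 then 0 else Real.exp (-1 / z.2 ^ pt)) :=
    Measurable.ite (measurable_snd (measurableSet_singleton 0)) measurable_const (by fun_prop)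
  fun_prop

lemma integral_Ioo_zero_eq_mul_left {k : ℝ} (hk : 0 < k) (r : ℝ) (g : ℝ → ℝ) :
    ∫ x in Ioo 0 r, g x = ∫ t in Ioo 0 (r / k), k * g (k * t) := by
  have him : (fun t => k * t) '' Ioo 0 (r / k) = Ioo 0 r := by
    ext x
    constructor
    · rintro ⟨t, ⟨h0, h1⟩, rfl⟩
      exact ⟨mul_pos hk h0, by rwa [lt_div_iff₀ hk, mul_comm] at h1⟩
    · rintro ⟨h0, h1⟩
      exact ⟨x / k, ⟨div_pos h0 hk, div_lt_div_of_pos_right h1 hk⟩, by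
        change k * (x / k) = x
        field_simp⟩
  rw [← him, integral_image_eq_integral_abs_deriv_smul measurableSet_Ioo
    (f' := fun _ => k) (fun t _ => by
      simpa using ((hasDerivAt_id t).const_mul k).hasDerivWithinAt)
    (fun s _ t _ h => mul_left_cancel₀ hk.ne' h)]
  simp [abs_of_pos hk]

open Real in
lemma integral_Ioo_zero_eq_exp_neg_div {ε r : ℝ} (hε : 0 < ε) (hr : 0 < r) (g : ℝ → ℝ) :
    ∫ y in Ioo 0 r, g y =
      ∫ w in Ioi (-(ε * log r)), exp (-w / ε) / ε * g (exp (-w / ε)) := by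
  have him : (fun w => exp (-w / ε)) '' Ioi (-(ε * log r)) = Ioo 0 r := by
    ext y
    constructor
    · rintro ⟨w, hw, rfl⟩
      refine ⟨exp_pos _, ?_⟩
      change exp (-w / ε) < r
      rw [← lt_log_iff_exp_lt hr, div_lt_iff₀ hε]
      have : -(ε * log r) < w := hw
      linarith
    · rintro ⟨h0, h1⟩
      refine ⟨-(ε * log y), ?_, ?_⟩
      · have := mul_lt_mul_of_pos_left (log_lt_log h0 h1) hε
        simpa using this
      · change exp (-(-(ε * log y)) / ε) = y
        rw [neg_neg, mul_div_cancel_left₀ _ hε.ne', exp_log h0]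
  rw [← him, integral_image_eq_integral_abs_deriv_smul measurableSet_Ioi
    (f' := fun w => exp (-w / ε) * (-1 / ε)) (fun w _ => by
      simpa using (((hasDerivAt_id' w).fun_neg.div_const ε).exp).hasDerivWithinAt)
    (fun s _ t _ h => by
      have := exp_injective h
      field_simp at this
      linarith)]
  refine setIntegral_congr_fun measurableSet_Ioi fun w _ => ?_
  have : |exp (-w / ε) * (-1 / ε)| = exp (-w / ε) / ε := by
    rw [abs_mul, abs_of_pos (exp_pos _), abs_div, abs_neg, abs_one, abs_of_pos hε]
    ring
  simp only [this, smul_eq_mul]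

/-- The factor `f / (x ^ a * y ^ b)` at `x = ε ^ (1 / p) * t`, `y = exp (-w / ε)`. -/
noncomputable def rescaledFactor (q qt : ℕ) (p pt ε t w : ℝ) : ℝ :=
  1 + Real.exp ((q * w - t ^ (-p)) / ε) +
    Real.exp (-Real.exp (pt * w / ε)) / (ε ^ (1 / p) * t) ^ qt

lemma one_add_exp_le_rescaledFactor (q qt : ℕ) (p pt : ℝ) {ε t : ℝ} (hε : 0 < ε) (ht : 0 < t)
    (w : ℝ) :
    1 + Real.exp ((q * w - t ^ (-p)) / ε) ≤ rescaledFactor q qt p pt ε t w := by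
  unfold rescaledFactor
  have : 0 ≤ Real.exp (-Real.exp (pt * w / ε)) / (ε ^ (1 / p) * t) ^ qt := by positivity
  linarith

lemma rescaledFactor_pos (q qt : ℕ) (p pt : ℝ) {ε t : ℝ} (hε : 0 < ε) (ht : 0 < t)
    (w : ℝ) : 0 < rescaledFactor q qt p pt ε t w :=
  lt_of_lt_of_le (by positivity) (one_add_exp_le_rescaledFactor q qt p pt hε ht w)

/-- The rescaled integrand, at `σ = (ε - 1) / b`. -/
noncomputable def rescaledIntegrand (a b q qt : ℕ) (p pt ε : ℝ) (z : ℝ × ℝ) : ℝ :=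
  z.1 ^ (a * ((ε - 1) / b)) * Real.exp (-z.2) *
    rescaledFactor q qt p pt ε z.1 z.2 ^ ((ε - 1) / b)

open Real in
lemma abs_fD_rpow_rescaled {a b q qt : ℕ} (hb : 0 < b) (hqb : q ≤ b) (hqta : qt ≤ a) {p : ℝ}
    (hp : 0 < p) (pt : ℝ) {ε t : ℝ} (hε : 0 < ε) (ht : 0 < t) (w : ℝ) :
    ε ^ (1 - (1 - (a : ℝ) / b) / p) * (ε ^ (1 / p) * (exp (-w / ε) / ε *
      |fD a b q qt p pt (ε ^ (1 / p) * t) (exp (-w / ε))| ^ ((ε - 1) / b))) =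
    ε ^ (a / (b * p) * ε) * rescaledIntegrand a b q qt p pt ε (t, w) := by
  have hk : 0 < ε ^ (1 / p) := by positivity
  have hx : 0 < ε ^ (1 / p) * t := by positivity
  have hb' : (0 : ℝ) < b := by exact_mod_cast hb
  have hfac : 1 + exp (-1 / (ε ^ (1 / p) * t) ^ p) / exp (-w / ε) ^ q +
      exp (-1 / exp (-w / ε) ^ pt) / (ε ^ (1 / p) * t) ^ qt =
      rescaledFactor q qt p pt ε t w := by
    unfold rescaledFactor
    congr 1
    · congr 1
      rw [mul_rpow hk.le ht.le, ← rpow_mul hε.le, one_div_mul_cancel hp.ne', rpow_one,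
        ← exp_nat_mul, ← exp_sub, rpow_neg ht.le]
      congr 1
      have : t ^ p ≠ 0 := by positivity
      field_simp
      ring
    · congr 2
      rw [← exp_mul, neg_div, one_div, ← exp_neg]
      congr 2
      ring
  have hP := rescaledFactor_pos q qt p pt hε ht w
  rw [fD_eq_monomial_mul hqb hqta p pt hx (exp_pos _), hfac, abs_of_pos (by positivity),
    mul_rpow (by positivity) hP.le, mul_rpow (by positivity) (by positivity), rescaledIntegrand,
    ← rpow_natCast, ← rpow_natCast, ← rpow_mul hx.le, ← rpow_mul (exp_pos _).le,
    mul_rpow hk.le ht.le, ← rpow_mul hε.le, ← exp_mul]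
  have e1 : ε ^ (1 - (1 - (a : ℝ) / b) / p) * ε ^ (1 / p) * ε ^ (1 / p * (a * ((ε - 1) / b)))
      = ε * ε ^ (a / (b * p) * ε) := by
    rw [← rpow_add hε, ← rpow_add hε, ← rpow_one_add' hε.le (by positivity)]
    congr 1
    field_simp
    ring
  have e2 : exp (-w / ε) * exp (-w / ε * (b * ((ε - 1) / b))) = exp (-w) := by
    rw [← exp_add]
    congr 1
    field_simp
    ring
  calc _ = (ε ^ (1 - (1 - (a : ℝ) / b) / p) * ε ^ (1 / p) * ε ^ (1 / p * (a * ((ε - 1) / b)))) *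
        (exp (-w / ε) * exp (-w / ε * (b * ((ε - 1) / b)))) / ε * t ^ (a * ((ε - 1) / b)) *
        rescaledFactor q qt p pt ε t w ^ ((ε - 1) / b) := by ring
    _ = _ := by
      rw [e1, e2]
      field_simp

lemma measurable_rescaledIntegrand (a b q qt : ℕ) (p pt ε : ℝ) :
    Measurable (rescaledIntegrand a b q qt p pt ε) := by
  unfold rescaledIntegrand rescaledFactor
  fun_prop

/-- An integrable majorant for the rescaled integrands, uniform in small `ε`. -/
noncomputable def dominator (a b q : ℕ) (p δ : ℝ) (z : ℝ × ℝ) : ℝ :=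
  Real.exp (1 / (2 * b)) * (z.1 ^ (-(a : ℝ) / b) + z.1 ^ (-(a : ℝ) / b + δ)) *
    Real.exp (-(1 + q / (2 * b) * z.1 ^ p) * z.2)

open Real in
lemma rescaledIntegrand_le_dominator {a b q : ℕ} (hb : 0 < b) (hab : a < b) (qt : ℕ) {p : ℝ}
    (pt : ℝ) {δ ε t w : ℝ} (hε : 0 < ε) (hε2 : ε ≤ 1 / 2) (hεδ : ε ≤ δ)
    (ht : 0 < t) (hεt : ε * t ^ p ≤ 1) :
    rescaledIntegrand a b q qt p pt ε (t, w) ≤ dominator a b q p δ (t, w) := by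
  have hb' : (0 : ℝ) < b := by exact_mod_cast hb
  have hab' : (a : ℝ) / b ≤ 1 := by
    rw [div_le_one hb']
    exact_mod_cast hab.le
  have htp : 0 < t ^ p := by positivity
  have h1 : t ^ (a * ((ε - 1) / b)) ≤ t ^ (-(a : ℝ) / b) + t ^ (-(a : ℝ) / b + δ) := by
    have ha0 : 0 ≤ (a : ℝ) / b := by positivity
    have e : a * ((ε - 1) / b) = -(a : ℝ) / b + a / b * ε := by ring
    rcases le_total t 1 with h | h
    · have := rpow_le_rpow_of_exponent_ge ht h
        (show -(a : ℝ) / b ≤ a * ((ε - 1) / b) by rw [e]; nlinarith)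
      have : 0 < t ^ (-(a : ℝ) / b + δ) := by positivity
      linarith
    · have := rpow_le_rpow_of_exponent_le h
        (show a * ((ε - 1) / b) ≤ -(a : ℝ) / b + δ by rw [e]; nlinarith)
      have : 0 < t ^ (-(a : ℝ) / b) := by positivity
      linarith
  have hP := one_add_exp_le_rescaledFactor q qt p pt hε ht w
  have hP1 : 1 ≤ rescaledFactor q qt p pt ε t w := by
    have := exp_pos ((q * w - t ^ (-p)) / ε)
    linarith
  have hPe : exp (q * w * t ^ p - 1) ≤ rescaledFactor q qt p pt ε t w := by
    have e : q * w * t ^ p - 1 = (q * w - t ^ (-p)) * t ^ p := by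
      rw [sub_mul, ← rpow_add ht]
      simp
    rcases le_total (q * w - t ^ (-p)) 0 with h | h
    · refine le_trans ?_ hP1
      rw [exp_le_one_iff, e]
      exact mul_nonpos_of_nonpos_of_nonneg h htp.le
    · have : exp (q * w * t ^ p - 1) ≤ exp ((q * w - t ^ (-p)) / ε) := by
        rw [exp_le_exp, e, div_eq_mul_inv]
        refine mul_le_mul_of_nonneg_left ?_ h
        rw [le_inv_comm₀ htp hε, ← one_div, le_div_iff₀ htp]
        exact hεt
      linarith
  have h2 : rescaledFactor q qt p pt ε t w ^ ((ε - 1) / b) ≤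
      exp (1 / (2 * b)) * exp (-(q / (2 * b) * t ^ p) * w) := by
    calc _ ≤ rescaledFactor q qt p pt ε t w ^ (-(1 / (2 * b)) : ℝ) := by
          refine rpow_le_rpow_of_exponent_le hP1 ?_
          rw [div_le_iff₀ hb']
          field_simp
          linarith
      _ ≤ exp (q * w * t ^ p - 1) ^ (-(1 / (2 * b)) : ℝ) :=
          rpow_le_rpow_of_nonpos (exp_pos _) hPe (by rw [neg_nonpos]; positivity)
      _ = _ := by
          rw [← exp_mul, ← exp_add]
          congr 1
          field_simp
          ring
  calc rescaledIntegrand a b q qt p pt ε (t, w)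
      ≤ (t ^ (-(a : ℝ) / b) + t ^ (-(a : ℝ) / b + δ)) * exp (-w) *
        (exp (1 / (2 * b)) * exp (-(q / (2 * b) * t ^ p) * w)) := by
        unfold rescaledIntegrand
        dsimp only
        gcongr
    _ = dominator a b q p δ (t, w) := by
        unfold dominator
        have : exp (-(1 + q / (2 * b) * t ^ p) * w) =
            exp (-w) * exp (-(q / (2 * b) * t ^ p) * w) := by
          rw [← exp_add]
          congr 1
          ring
        rw [this]
        ring

open Real in
lemma integrable_dominator {a b q : ℕ} (hb : 0 < b) (hab : a < b) (hq : 0 < q) {p δ : ℝ}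
    (hδ : 0 ≤ δ) (hδp : 1 + δ < (a : ℝ) / b + p) :
    Integrable (dominator a b q p δ)
      ((volume.restrict (Ioi 0)).prod (volume.restrict (Ioi 0))) := by
  have hb' : (0 : ℝ) < b := by exact_mod_cast hb
  have hq' : (0 : ℝ) < q := by exact_mod_cast hq
  have hab' : (a : ℝ) / b < 1 := by
    rw [div_lt_one hb']
    exact_mod_cast hab
  have hmeas : Measurable (dominator a b q p δ) := by
    unfold dominator
    fun_prop
  have hm : Measurable fun t : ℝ => exp (1 / (2 * b)) *
      (t ^ (-(a : ℝ) / b) + t ^ (-(a : ℝ) / b + δ)) * (1 + q / (2 * b) * t ^ p)⁻¹ := by fun_prop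
  rw [integrable_prod_iff hmeas.aestronglyMeasurable]
  constructor
  · filter_upwards [ae_restrict_mem measurableSet_Ioi] with t ht
    have ht : 0 < t := ht
    have := (integrableOn_exp_mul_Ioi (a := -(1 + q / (2 * b) * t ^ p))
      (by rw [neg_lt_zero]; positivity) 0).const_mul
      (exp (1 / (2 * b)) * (t ^ (-(a : ℝ) / b) + t ^ (-(a : ℝ) / b + δ)))
    exact this
  · have key : IntegrableOn (fun t : ℝ => exp (1 / (2 * b)) *
        (t ^ (-(a : ℝ) / b) + t ^ (-(a : ℝ) / b + δ)) * (1 + q / (2 * b) * t ^ p)⁻¹)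
        (Ioi 0) volume := by
      rw [← Ioc_union_Ioi_eq_Ioi zero_le_one]
      refine IntegrableOn.union ?_ ?_
      · have hi : IntegrableOn (fun t : ℝ => exp (1 / (2 * b)) *
            (t ^ (-(a : ℝ) / b) + t ^ (-(a : ℝ) / b + δ))) (Ioc 0 1) volume := by
          have h0 : -1 < -(a : ℝ) / b := by rw [neg_div]; linarith
          have h1 := (intervalIntegral.intervalIntegrable_rpow' (a := 0) (b := 1) h0).1
          have h2 := (intervalIntegral.intervalIntegrable_rpow' (a := 0) (b := 1)
            (show -1 < -(a : ℝ) / b + δ by linarith)).1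
          exact (h1.add h2).const_mul _
        refine Integrable.mono' hi hm.aestronglyMeasurable ?_
        filter_upwards [ae_restrict_mem measurableSet_Ioc] with t ht
        have ht0 : 0 < t := ht.1
        rw [norm_of_nonneg (by positivity)]
        refine mul_le_of_le_one_right (by positivity) (inv_le_one_of_one_le₀ ?_)
        have : 0 < q / (2 * b) * t ^ p := by positivity
        linarith
      · have hi : IntegrableOn (fun t : ℝ => exp (1 / (2 * b)) * 2 * (q / (2 * b) : ℝ)⁻¹ *
            t ^ (-(a : ℝ) / b + δ - p)) (Ioi 1) volume :=
          (integrableOn_Ioi_rpow_of_lt (by rw [neg_div]; linarith) one_pos).const_mul _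
        refine Integrable.mono' hi hm.aestronglyMeasurable ?_
        filter_upwards [ae_restrict_mem measurableSet_Ioi] with t ht
        have ht1 : 1 < t := ht
        have ht0 : 0 < t := by linarith
        rw [norm_of_nonneg (by positivity)]
        have h1 : t ^ (-(a : ℝ) / b) ≤ t ^ (-(a : ℝ) / b + δ) :=
          rpow_le_rpow_of_exponent_le ht1.le (by linarith)
        have h2 : (1 + q / (2 * b) * t ^ p)⁻¹ ≤ (q / (2 * b) * t ^ p)⁻¹ :=
          inv_anti₀ (by positivity) (by linarith)
        calc _ ≤ exp (1 / (2 * b)) * (t ^ (-(a : ℝ) / b + δ) + t ^ (-(a : ℝ) / b + δ)) *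
              (q / (2 * b) * t ^ p)⁻¹ := by gcongr
          _ = _ := by
            rw [rpow_sub ht0, mul_inv]
            ring
    refine key.congr_fun_ae ?_
    filter_upwards [ae_restrict_mem measurableSet_Ioi] with t ht
    have ht : 0 < t := ht
    have hc : -(1 + q / (2 * b) * t ^ p) < 0 := by rw [neg_lt_zero]; positivity
    have : ∀ w, ‖dominator a b q p δ (t, w)‖ = exp (1 / (2 * b)) *
        (t ^ (-(a : ℝ) / b) + t ^ (-(a : ℝ) / b + δ)) *
        exp (-(1 + q / (2 * b) * t ^ p) * w) := fun w => by
      rw [norm_of_nonneg (by unfold dominator; dsimp only; positivity)]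
      rfl
    simp_rw [this]
    rw [integral_const_mul, integral_exp_mul_Ioi hc, mul_zero, exp_zero, neg_div_neg_eq, ← one_div (1 + _)]

/-- The pointwise limit of the rescaled integrands. -/
noncomputable def limitIntegrand (a b q : ℕ) (p : ℝ) (z : ℝ × ℝ) : ℝ :=
  if q * z.2 < z.1 ^ (-p) then z.1 ^ (-(a : ℝ) / b) * Real.exp (-z.2) else 0

lemma measurable_limitIntegrand (a b q : ℕ) (p : ℝ) : Measurable (limitIntegrand a b q p) :=
  Measurable.ite (measurableSet_lt (by fun_prop) (by fun_prop)) (by fun_prop) measurable_const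

open Real in
lemma tendsto_rescaledFactor_last (qt : ℕ) (p : ℝ) {pt t w : ℝ} (hpt : 0 < pt) (ht : 0 < t)
    (hw : 0 < w) :
    Tendsto (fun ε : ℝ => exp (-exp (pt * w / ε)) / (ε ^ (1 / p) * t) ^ qt)
      (nhdsWithin 0 (Ioi 0)) (nhds 0) := by
  have hc : 0 < pt * w := mul_pos hpt hw
  have h := ((tendsto_rpow_mul_exp_neg_mul_atTop_nhds_zero (1 / p * qt) (pt * w) hc).comp
    tendsto_inv_nhdsGT_zero).div_const (t ^ qt)
  rw [zero_div] at h
  refine squeeze_zero' ?_ ?_ h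
  · filter_upwards [self_mem_nhdsWithin] with ε hε
    have hε : 0 < ε := hε
    positivity
  · filter_upwards [self_mem_nhdsWithin] with ε hε
    have hε : 0 < ε := hε
    have h1 : exp (-exp (pt * w / ε)) ≤ exp (-(pt * w) * ε⁻¹) := by
      rw [exp_le_exp, neg_mul, neg_le_neg_iff, ← div_eq_mul_inv]
      linarith [add_one_le_exp (pt * w / ε)]
    calc _ ≤ exp (-(pt * w) * ε⁻¹) / (ε ^ (1 / p) * t) ^ qt := by gcongr
      _ = _ := by
        simp only [Function.comp_apply]
        rw [mul_pow, ← rpow_natCast (ε ^ (1 / p)), ← rpow_mul hε.le, inv_rpow hε.le]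
        have : 0 < ε ^ (1 / p * qt) := by positivity
        field_simp

open Real in
lemma tendsto_rescaledIntegrand {a b q : ℕ} (hb : 0 < b) (qt : ℕ) {p pt t w : ℝ} (hpt : 0 < pt)
    (ht : 0 < t) (hw : 0 < w) (hne : q * w ≠ t ^ (-p)) :
    Tendsto (fun ε : ℝ => rescaledIntegrand a b q qt p pt ε (t, w))
      (nhdsWithin 0 (Ioi 0)) (nhds (limitIntegrand a b q p (t, w))) := by
  have hb' : (0 : ℝ) < b := by exact_mod_cast hb
  have hid : Tendsto (fun ε : ℝ => ε) (nhdsWithin 0 (Ioi 0)) (nhds 0) := nhdsWithin_le_nhds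
  have hσ : Tendsto (fun ε : ℝ => (ε - 1) / b) (nhdsWithin 0 (Ioi 0)) (nhds ((0 - 1) / b)) :=
    (hid.sub_const 1).div_const _
  have hmon : Tendsto (fun ε : ℝ => t ^ (a * ((ε - 1) / b)) * exp (-w))
      (nhdsWithin 0 (Ioi 0)) (nhds (t ^ (-(a : ℝ) / b) * exp (-w))) := by
    have := (tendsto_const_nhds (x := t)).rpow (hσ.const_mul (a : ℝ)) (Or.inl ht.ne')
    rw [show (a : ℝ) * ((0 - 1) / b) = -(a : ℝ) / b by ring] at this
    exact this.mul_const _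
  rcases hne.lt_or_gt with h | h
  · have hlim : limitIntegrand a b q p (t, w) = t ^ (-(a : ℝ) / b) * exp (-w) * 1 := by
      simp [limitIntegrand, h]
    rw [hlim]
    refine hmon.mul ?_
    have h1 : Tendsto (fun ε : ℝ => exp ((q * w - t ^ (-p)) / ε))
        (nhdsWithin 0 (Ioi 0)) (nhds 0) :=
      tendsto_exp_atBot.comp (tendsto_inv_nhdsGT_zero.const_mul_atTop_of_neg (sub_neg.2 h))
    have h2 : Tendsto (fun ε : ℝ => rescaledFactor q qt p pt ε t w)
        (nhdsWithin 0 (Ioi 0)) (nhds 1) := by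
      simpa [rescaledFactor] using (h1.const_add 1).add (tendsto_rescaledFactor_last qt p hpt ht hw)
    simpa using h2.rpow hσ (Or.inl one_ne_zero)
  · have hlim : limitIntegrand a b q p (t, w) = t ^ (-(a : ℝ) / b) * exp (-w) * 0 := by
      simp [limitIntegrand, h.le]
    rw [hlim]
    refine hmon.mul ?_
    set A := q * w - t ^ (-p)
    have hA : 0 < A := sub_pos.2 h
    have h1 : Tendsto (fun ε : ℝ => exp (-(A / (2 * b)) * ε⁻¹))
        (nhdsWithin 0 (Ioi 0)) (nhds 0) :=
      tendsto_exp_atBot.comp (tendsto_inv_nhdsGT_zero.const_mul_atTop_of_neg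
        (by rw [neg_lt_zero]; positivity))
    refine squeeze_zero' ?_ ?_ h1
    · filter_upwards [self_mem_nhdsWithin] with ε hε
      exact rpow_nonneg (rescaledFactor_pos q qt p pt hε ht w).le _
    · filter_upwards [Ioo_mem_nhdsGT (show (0 : ℝ) < 1 / 2 by norm_num)] with ε hε
      have hP := one_add_exp_le_rescaledFactor q qt p pt hε.1 ht w
      have hσle : (ε - 1) / b ≤ -(1 / (2 * b)) := by
        rw [div_le_iff₀ hb']
        field_simp
        linarith [hε.2]
      calc _ ≤ exp (A / ε) ^ ((ε - 1) / b) :=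
            rpow_le_rpow_of_nonpos (exp_pos _) (by linarith)
              (div_nonpos_of_nonpos_of_nonneg (by linarith [hε.2]) hb'.le)
        _ ≤ exp (A / ε) ^ (-(1 / (2 * b)) : ℝ) :=
            rpow_le_rpow_of_exponent_le (one_le_exp (div_pos hA hε.1).le) hσle
        _ = _ := by
            rw [← exp_mul]
            congr 1
            field_simp

open Real in
lemma limitIntegrand_le_dominator (a : ℕ) {b : ℕ} (q : ℕ) (p δ : ℝ) {t w : ℝ}
    (ht : 0 < t) : limitIntegrand a b q p (t, w) ≤ dominator a b q p δ (t, w) := by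
  unfold limitIntegrand dominator
  dsimp only
  split_ifs with h
  · have h1 : t ^ (-(a : ℝ) / b) ≤ t ^ (-(a : ℝ) / b) + t ^ (-(a : ℝ) / b + δ) := by
      have : 0 < t ^ (-(a : ℝ) / b + δ) := by positivity
      linarith
    have htp : 0 < t ^ p := by positivity
    have h2 : q * w * t ^ p < 1 := by
      rw [rpow_neg ht.le, ← one_div, lt_div_iff₀ htp] at h
      exact h
    have h3 : exp (-w) ≤ exp (1 / (2 * b)) * exp (-(1 + q / (2 * b) * t ^ p) * w) := by
      rw [← exp_add, exp_le_exp]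
      have h4 : q * w * t ^ p * (1 / (2 * b)) ≤ 1 * (1 / (2 * b)) :=
        mul_le_mul_of_nonneg_right h2.le (by positivity)
      have e : q * w * t ^ p * (1 / (2 * b : ℝ)) = q / (2 * b) * t ^ p * w := by ring
      rw [e] at h4
      linarith
    calc _ ≤ (t ^ (-(a : ℝ) / b) + t ^ (-(a : ℝ) / b + δ)) *
          (exp (1 / (2 * b)) * exp (-(1 + q / (2 * b) * t ^ p) * w)) := by gcongr
      _ = _ := by ring
  · positivity

open Real in
lemma integral_limitIntegrand {a b q : ℕ} (hq : 0 < q) {p t : ℝ} (ht : 0 < t) :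
    ∫ w in Ioi (0 : ℝ), limitIntegrand a b q p (t, w) =
      t ^ (-(a : ℝ) / b) * (1 - exp (-1 / (q * t ^ p))) := by
  have hq' : (0 : ℝ) < q := by exact_mod_cast hq
  have hc : 0 < t ^ (-p) / q := by positivity
  have e : (fun w => limitIntegrand a b q p (t, w)) =
      (Iio (t ^ (-p) / q)).indicator (fun w => t ^ (-(a : ℝ) / b) * exp (-w)) := by
    ext w
    simp [limitIntegrand, indicator, lt_div_iff₀ hq', mul_comm]
  rw [e, setIntegral_indicator measurableSet_Iio, Ioi_inter_Iio, ← integral_Ioc_eq_integral_Ioo,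
    ← intervalIntegral.integral_of_le hc.le, intervalIntegral.integral_const_mul,
    intervalIntegral.integral_comp_neg (fun x => exp x), integral_exp, neg_zero, exp_zero,
    rpow_neg ht.le]
  congr 3
  field_simp

lemma integrable_limitIntegrand {a b q : ℕ} (hb : 0 < b) (hab : a < b) (hq : 0 < q) {p : ℝ}
    (hpcond : 1 - (a : ℝ) / b < p) :
    Integrable (limitIntegrand a b q p)
      ((volume.restrict (Ioi 0)).prod (volume.restrict (Ioi 0))) := by
  refine Integrable.mono' (integrable_dominator hb hab hq le_rfl (by linarith))
    (measurable_limitIntegrand a b q p).aestronglyMeasurable ?_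
  rw [Measure.prod_restrict]
  filter_upwards [ae_restrict_mem (measurableSet_Ioi.prod measurableSet_Ioi)] with z hz
  have ht : 0 < z.1 := hz.1
  rw [Real.norm_of_nonneg]
  · exact limitIntegrand_le_dominator a q p 0 ht
  · unfold limitIntegrand
    split_ifs <;> positivity

lemma ae_ne_rpow_neg {q : ℕ} (hq : 0 < q) (p : ℝ) (μ : Measure ℝ) [SFinite μ]
    (ν : Measure ℝ) [SFinite ν] [NullSingletonClass ν] :
    ∀ᵐ z ∂μ.prod ν, (q : ℝ) * z.2 ≠ z.1 ^ (-p) := by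
  have hq' : (q : ℝ) ≠ 0 := by exact_mod_cast hq.ne'
  have hs : MeasurableSet {z : ℝ × ℝ | (q : ℝ) * z.2 = z.1 ^ (-p)} :=
    measurableSet_eq_fun (by fun_prop) (by fun_prop)
  have h0 : μ.prod ν {z : ℝ × ℝ | (q : ℝ) * z.2 = z.1 ^ (-p)} = 0 := by
    rw [Measure.measure_prod_null hs]
    refine Eventually.of_forall fun t => ?_
    refine measure_mono_null (t := {t ^ (-p) / q}) (fun w hw => ?_) (measure_singleton _)
    have hw : (q : ℝ) * w = t ^ (-p) := hw
    rw [mem_singleton_iff, ← hw]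
    field_simp
  simpa [ae_iff] using h0

/-- The domain of integration in the rescaled coordinates. -/
def rescaledDomain (p r₁ r₂ ε : ℝ) : Set (ℝ × ℝ) :=
  Ioo 0 (r₁ / ε ^ (1 / p)) ×ˢ Ioi (-(ε * Real.log r₂))

lemma measurableSet_rescaledDomain (p r₁ r₂ ε : ℝ) :
    MeasurableSet (rescaledDomain p r₁ r₂ ε) :=
  measurableSet_Ioo.prod measurableSet_Ioi

lemma rescaledDomain_subset {p r₁ r₂ ε : ℝ} (hε : 0 < ε) (hr₂ : r₂ ∈ Ioo (0 : ℝ) 1) :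
    rescaledDomain p r₁ r₂ ε ⊆ Ioi 0 ×ˢ Ioi 0 := by
  rintro z ⟨h1, h2⟩
  refine ⟨h1.1, ?_⟩
  have h2 : -(ε * Real.log r₂) < z.2 := h2
  have := mul_neg_of_pos_of_neg hε (Real.log_neg hr₂.1 hr₂.2)
  exact lt_trans (by linarith) h2

open Real in
lemma norm_rescaledIntegrand_le_dominator {a b q : ℕ} (hb : 0 < b) (hab : a < b) (qt : ℕ) {p : ℝ}
    (hp : 0 < p) (pt : ℝ) {δ ε r₁ r₂ : ℝ} (hε : 0 < ε) (hε2 : ε ≤ 1 / 2) (hεδ : ε ≤ δ)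
    (hr₁ : r₁ ∈ Ioo (0 : ℝ) 1) {z : ℝ × ℝ} (hz : z ∈ rescaledDomain p r₁ r₂ ε) :
    ‖rescaledIntegrand a b q qt p pt ε z‖ ≤ dominator a b q p δ z := by
  have ht : 0 < z.1 := hz.1.1
  have hk : 0 < ε ^ (1 / p) := by positivity
  have hP := rescaledFactor_pos q qt p pt hε ht z.2
  rw [norm_of_nonneg (by unfold rescaledIntegrand; positivity)]
  refine rescaledIntegrand_le_dominator hb hab qt pt hε hε2 hεδ ht ?_
  have h1 : z.1 * ε ^ (1 / p) ≤ 1 := by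
    have := (lt_div_iff₀ hk).1 hz.1.2
    linarith [hr₁.2]
  have h2 := rpow_le_one (by positivity) h1 hp.le
  rwa [mul_rpow ht.le hk.le, ← rpow_mul hε.le, one_div_mul_cancel hp.ne', rpow_one,
    mul_comm] at h2

lemma tendsto_integral_rescaledIntegrand {a b q : ℕ} (hb : 0 < b) (hab : a < b) (hq : 0 < q)
    (qt : ℕ) {p pt : ℝ} (hp : 0 < p) (hpt : 0 < pt) (hpcond : 1 - (a : ℝ) / b < p)
    {r₁ r₂ : ℝ} (hr₁ : r₁ ∈ Ioo (0 : ℝ) 1) (hr₂ : r₂ ∈ Ioo (0 : ℝ) 1) :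
    Tendsto (fun ε => ∫ z in rescaledDomain p r₁ r₂ ε, rescaledIntegrand a b q qt p pt ε z)
      (nhdsWithin 0 (Ioi 0))
      (nhds (∫ x in Ioi (0 : ℝ),
        x ^ (-(a : ℝ) / b) * (1 - Real.exp (-1 / (q * x ^ p))))) := by
  set μ : Measure (ℝ × ℝ) := (volume.restrict (Ioi 0)).prod (volume.restrict (Ioi 0)) with hμ
  have hμ' : μ = volume.restrict (Ioi 0 ×ˢ Ioi 0) := by
    rw [hμ, Measure.prod_restrict, Measure.volume_eq_prod]
  have hquad : ∀ᵐ z ∂μ, z ∈ Ioi (0 : ℝ) ×ˢ Ioi (0 : ℝ) := by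
    rw [hμ']
    exact ae_restrict_mem (measurableSet_Ioi.prod measurableSet_Ioi)
  have hlim : ∫ z, limitIntegrand a b q p z ∂μ = ∫ x in Ioi (0 : ℝ),
      x ^ (-(a : ℝ) / b) * (1 - Real.exp (-1 / (q * x ^ p))) := by
    rw [hμ, integral_prod _ (integrable_limitIntegrand hb hab hq hpcond)]
    exact setIntegral_congr_fun measurableSet_Ioi fun t ht => integral_limitIntegrand hq ht
  rw [← hlim]
  set δ : ℝ := (p + a / b - 1) / 2 with hδ
  have hδ0 : 0 < δ := by rw [hδ]; linarith
  have hDCT : Tendsto (fun ε => ∫ z, (rescaledDomain p r₁ r₂ ε).indicator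
      (rescaledIntegrand a b q qt p pt ε) z ∂μ) (nhdsWithin 0 (Ioi 0))
      (nhds (∫ z, limitIntegrand a b q p z ∂μ)) := by
    refine tendsto_integral_filter_of_dominated_convergence (dominator a b q p δ)
      (Eventually.of_forall fun ε => ((measurable_rescaledIntegrand a b q qt p pt ε).indicator
        (measurableSet_rescaledDomain p r₁ r₂ ε)).aestronglyMeasurable) ?_
      (integrable_dominator hb hab hq hδ0.le (by rw [hδ]; linarith)) ?_
    · filter_upwards [Ioo_mem_nhdsGT (show (0 : ℝ) < min (1 / 2) δ by positivity)] with ε hε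
      filter_upwards [hquad] with z hz
      by_cases hzS : z ∈ rescaledDomain p r₁ r₂ ε
      · rw [indicator_of_mem hzS]
        exact norm_rescaledIntegrand_le_dominator hb hab qt hp pt hε.1
          (hε.2.le.trans (min_le_left _ _)) (hε.2.le.trans (min_le_right _ _)) hr₁ hzS
      · rw [indicator_of_notMem hzS, norm_zero]
        have ht : 0 < z.1 := hz.1
        unfold dominator
        positivity
    · filter_upwards [hquad, ae_ne_rpow_neg hq p _ _] with z hz hne
      have ht : 0 < z.1 := hz.1
      have hw : 0 < z.2 := hz.2
      refine (tendsto_rescaledIntegrand hb qt hpt ht hw hne).congr' ?_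
      have hid : Tendsto (fun ε : ℝ => ε) (nhdsWithin 0 (Ioi 0)) (nhds 0) := nhdsWithin_le_nhds
      have h1 : Tendsto (fun ε : ℝ => z.1 * ε ^ (1 / p)) (nhdsWithin 0 (Ioi 0)) (nhds 0) := by
        have := (hid.rpow_const (p := 1 / p) (Or.inr (by positivity))).const_mul z.1
        rwa [Real.zero_rpow (by positivity), mul_zero] at this
      have h2 : Tendsto (fun ε : ℝ => -(ε * Real.log r₂)) (nhdsWithin 0 (Ioi 0)) (nhds 0) := by
        simpa using (hid.mul_const (Real.log r₂)).neg
      filter_upwards [self_mem_nhdsWithin, h1.eventually_lt_const hr₁.1,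
        h2.eventually_lt_const hw] with ε hε hε1 hε2
      have hε : 0 < ε := hε
      have hk : 0 < ε ^ (1 / p) := by positivity
      rw [indicator_of_mem]
      exact ⟨⟨ht, (lt_div_iff₀ hk).2 hε1⟩, hε2⟩
  refine hDCT.congr' ?_
  filter_upwards [self_mem_nhdsWithin] with ε hε
  rw [hμ', setIntegral_indicator (measurableSet_rescaledDomain p r₁ r₂ ε),
    inter_eq_self_of_subset_right (rescaledDomain_subset hε hr₂)]

open Real in
lemma integrableOn_abs_fD_rpow {a b q qt : ℕ} (hb : 0 < b) (hab : a < b) (hqb : q ≤ b)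
    (hqta : qt ≤ a) (p pt : ℝ) {σ r₁ r₂ : ℝ} (hσ : -1 / b < σ) (hσ0 : σ < 0) (hr₁ : 0 < r₁)
    (hr₂ : 0 < r₂) :
    IntegrableOn (fun z : ℝ × ℝ => |fD a b q qt p pt z.1 z.2| ^ σ)
      (Ioo 0 r₁ ×ˢ Ioo 0 r₂) volume := by
  have hb' : (0 : ℝ) < b := by exact_mod_cast hb
  have hbσ : -1 < b * σ := by
    rw [div_lt_iff₀ hb'] at hσ
    linarith
  have haσ : -1 < a * σ := by
    have : (a : ℝ) < b := by exact_mod_cast hab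
    nlinarith
  have h1 : IntegrableOn (fun x : ℝ => x ^ (a * σ)) (Ioo 0 r₁) volume :=
    (intervalIntegral.integrableOn_Ioo_rpow_iff hr₁).2 haσ
  have h2 : IntegrableOn (fun x : ℝ => x ^ (b * σ)) (Ioo 0 r₂) volume :=
    (intervalIntegral.integrableOn_Ioo_rpow_iff hr₂).2 hbσ
  have h12 := Integrable.mul_prod h1 h2
  rw [Measure.prod_restrict, ← Measure.volume_eq_prod] at h12
  refine Integrable.mono' h12
    ((measurable_fD a b q qt p pt).abs.pow_const σ).aestronglyMeasurable ?_
  filter_upwards [ae_restrict_mem (measurableSet_Ioo.prod measurableSet_Ioo)] with z hz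
  have hx : 0 < z.1 := hz.1.1
  have hy : 0 < z.2 := hz.2.1
  have hfac : 1 ≤ 1 + exp (-1 / z.1 ^ p) / z.2 ^ q + exp (-1 / z.2 ^ pt) / z.1 ^ qt := by
    have : 0 ≤ exp (-1 / z.1 ^ p) / z.2 ^ q := by positivity
    have : 0 ≤ exp (-1 / z.2 ^ pt) / z.1 ^ qt := by positivity
    linarith
  rw [fD_eq_monomial_mul hqb hqta p pt hx hy, norm_of_nonneg (by positivity),
    abs_of_pos (by positivity), mul_rpow (by positivity) (by positivity),
    mul_rpow (by positivity) (by positivity), ← rpow_natCast, ← rpow_natCast, ← rpow_mul hx.le,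
    ← rpow_mul hy.le]
  exact mul_le_of_le_one_right (by positivity) (rpow_le_one_of_one_le_of_nonpos hfac hσ0.le)

open Real in
lemma rpow_mul_integral_abs_fD_rpow {a b q qt : ℕ} (hb : 0 < b) (hab : a < b) (hq : 0 < q)
    (hqb : q ≤ b) (hqta : qt ≤ a) {p : ℝ} (hp : 0 < p) (pt : ℝ) {r₁ r₂ : ℝ} (hr₁ : r₁ ∈ Ioo (0 : ℝ) 1)
    (hr₂ : r₂ ∈ Ioo (0 : ℝ) 1) {ε : ℝ} (hε : 0 < ε) (hε2 : ε ≤ 1 / 2)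
    (hεδ : ε < p + a / b - 1) :
    ε ^ (1 - (1 - (a : ℝ) / b) / p) * ∫ z in Icc (0 : ℝ) r₁ ×ˢ Icc (0 : ℝ) r₂,
      |fD a b q qt p pt z.1 z.2| ^ ((ε - 1) / b) =
    ε ^ (a / (b * p) * ε) *
      ∫ z in rescaledDomain p r₁ r₂ ε, rescaledIntegrand a b q qt p pt ε z := by
  have hb' : (0 : ℝ) < b := by exact_mod_cast hb
  have hk : 0 < ε ^ (1 / p) := by positivity
  have hσ : -1 / (b : ℝ) < (ε - 1) / b := div_lt_div_of_pos_right (by linarith) hb'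
  have hσ0 : (ε - 1) / b < 0 := div_neg_of_neg_of_pos (by linarith) hb'
  have hset : (Icc (0 : ℝ) r₁ ×ˢ Icc (0 : ℝ) r₂ : Set (ℝ × ℝ)) =ᵐ[volume]
      (Ioo 0 r₁ ×ˢ Ioo 0 r₂ : Set (ℝ × ℝ)) := by
    rw [Measure.volume_eq_prod]
    exact Measure.set_prod_ae_eq Ioo_ae_eq_Icc.symm Ioo_ae_eq_Icc.symm
  have hint : IntegrableOn (rescaledIntegrand a b q qt p pt ε) (rescaledDomain p r₁ r₂ ε)
      (volume.prod volume) := by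
    have hdom := integrable_dominator hb hab hq hε.le (show 1 + ε < (a : ℝ) / b + p by linarith)
    rw [Measure.prod_restrict] at hdom
    refine Integrable.mono' (IntegrableOn.mono_set hdom (rescaledDomain_subset hε hr₂))
      (measurable_rescaledIntegrand a b q qt p pt ε).aestronglyMeasurable ?_
    filter_upwards [ae_restrict_mem (measurableSet_rescaledDomain p r₁ r₂ ε)] with z hz
    exact norm_rescaledIntegrand_le_dominator hb hab qt hp pt hε hε2 le_rfl hr₁ hz
  have hint' := integrableOn_abs_fD_rpow hb hab hqb hqta p pt hσ hσ0 hr₁.1 hr₂.1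
  rw [setIntegral_congr_set hset]
  rw [Measure.volume_eq_prod] at hint' ⊢
  rw [setIntegral_prod _ hint', integral_Ioo_zero_eq_mul_left hk, rescaledDomain,
    setIntegral_prod _ hint, ← integral_const_mul, ← integral_const_mul]
  refine setIntegral_congr_fun measurableSet_Ioo fun t ht => ?_
  dsimp only
  rw [integral_Ioo_zero_eq_exp_neg_div hε hr₂.1, ← integral_const_mul, ← integral_const_mul,
    ← integral_const_mul]
  exact setIntegral_congr_fun measurableSet_Ioi fun w _ =>
    abs_fD_rpow_rescaled hb hqb hqta hp pt hε ht.1 w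

lemma tendsto_rpow_const_mul_self_nhdsGT_zero (c : ℝ) :
    Tendsto (fun ε : ℝ => ε ^ (c * ε)) (nhdsWithin 0 (Ioi 0)) (nhds 1) := by
  have h : Tendsto (fun ε : ℝ => Real.exp (c * (ε * Real.log ε))) (nhdsWithin 0 (Ioi 0))
      (nhds (Real.exp (c * (0 * Real.log 0)))) :=
    ((Real.continuous_exp.comp (Real.continuous_mul_log.const_mul c)).tendsto 0).mono_left
      nhdsWithin_le_nhds
  simp only [zero_mul, mul_zero, Real.exp_zero] at h
  refine h.congr' ?_
  filter_upwards [self_mem_nhdsWithin] with ε hε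
  rw [Real.rpow_def_of_pos hε]
  congr 1
  ring

/-- If `p > 1 - a/b`, then
`lim_{σ → -1/b⁺} (bσ+1)^{1-(1-a/b)/p} ∫_V |f|^σ = Ĉ`, where
`Ĉ = ∫₀^∞ x^{-a/b}(1 - e^{-1/(q x^p)}) dx` converges. -/
theorem stmt16 (a b q qt : ℕ) (ha : 2 ≤ a) (hab : a < b) (p pt : ℝ) (hp : 0 < p)
    (hpt : 0 < pt) (hq : Even q) (hq2 : 2 ≤ q) (hqb : q ≤ b) (hqt : Even qt)
    (hqt2 : 2 ≤ qt) (hqta : qt ≤ a) (hpcond : 1 - (a : ℝ) / b < p)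
    (r₁ r₂ : ℝ) (hr₁ : r₁ ∈ Ioo (0 : ℝ) 1) (hr₂ : r₂ ∈ Ioo (0 : ℝ) 1) :
    IntegrableOn
      (fun x : ℝ => x ^ (-(a : ℝ) / b) * (1 - Real.exp (-1 / (q * x ^ p))))
      (Ioi 0) volume ∧
    Tendsto
      (fun σ : ℝ => ((b : ℝ) * σ + 1) ^ (1 - (1 - (a : ℝ) / b) / p) *
        ∫ z in Icc (0 : ℝ) r₁ ×ˢ Icc (0 : ℝ) r₂, |fD a b q qt p pt z.1 z.2| ^ σ)
      (nhdsWithin (-1 / b) (Ioo (-1 / b) 0))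
      (nhds (∫ x in Ioi (0 : ℝ), x ^ (-(a : ℝ) / b) * (1 - Real.exp (-1 / (q * x ^ p))))) := by

  have hb : 0 < b := by omega
  have hq0 : 0 < q := by omega
  have hb' : (0 : ℝ) < b := by exact_mod_cast hb
  constructor
  · refine (integrable_limitIntegrand hb hab hq0 hpcond).integral_prod_left.congr ?_
    filter_upwards [ae_restrict_mem measurableSet_Ioi] with t ht
    exact integral_limitIntegrand hq0 ht
  · have hε : Tendsto (fun σ : ℝ => (b : ℝ) * σ + 1) (nhdsWithin (-1 / b) (Ioo (-1 / b) 0))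
        (nhdsWithin 0 (Ioi 0)) := by
      refine tendsto_nhdsWithin_iff.2 ⟨?_, ?_⟩
      · have h : Tendsto (fun σ : ℝ => (b : ℝ) * σ + 1) (nhds (-1 / b))
            (nhds ((b : ℝ) * (-1 / b) + 1)) := Continuous.tendsto (by fun_prop) _
        rw [mul_div_cancel₀ _ hb'.ne', neg_add_cancel] at h
        exact h.mono_left nhdsWithin_le_nhds
      · filter_upwards [self_mem_nhdsWithin] with σ hσ
        have := (div_lt_iff₀ hb').1 hσ.1
        change 0 < b * σ + 1
        linarith
    have hlim := (tendsto_rpow_const_mul_self_nhdsGT_zero (a / (b * p))).mul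
      (tendsto_integral_rescaledIntegrand hb hab hq0 qt hp hpt hpcond hr₁ hr₂)
    rw [one_mul] at hlim
    have hmin : (0 : ℝ) < min (1 / 2) (p + a / b - 1) := lt_min one_half_pos (by linarith)
    have hlim' := hlim.congr' (f₂ := fun ε : ℝ => ε ^ (1 - (1 - (a : ℝ) / b) / p) *
        ∫ z in Icc (0 : ℝ) r₁ ×ˢ Icc (0 : ℝ) r₂,
          |fD a b q qt p pt z.1 z.2| ^ ((ε - 1) / b)) <| by
      have hmem : Ioo (0 : ℝ) (min (1 / 2) (p + a / b - 1)) ∈ nhdsWithin (0 : ℝ) (Ioi 0) :=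
        Ioo_mem_nhdsGT hmin
      filter_upwards [hmem] with ε hε
      exact (rpow_mul_integral_abs_fD_rpow hb hab hq0 hqb hqta hp pt hr₁ hr₂ hε.1
        (hε.2.le.trans (min_le_left _ _)) (hε.2.trans_le (min_le_right _ _))).symm
    refine (hlim'.comp hε).congr fun σ => ?_
    simp only [Function.comp_apply, add_sub_cancel_right, mul_div_cancel_left₀ _ hb'.ne']
end
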